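/- Let α be a type and let R, Ro be binary relations on α satisfying the outermost local commutation property: whenever Ro G H and R G J with H ≠ J, either Ro J H, or there exists K with R H K and Ro J K. Then for all single steps, the one-step diagram extends to arbitrary reduction sequences in the following quantitative form: for all n, m and all G, H, J with G Ro^n H and G R^m J, there exist K, k, l with H R^k K and J Ro^l K such that m + l − (n + k) ≥ 0, i.e., n + k ≤ m + l; in particular, taking n = 1 and m = 1, whenever Ro G H and R G J with H ≠ J, either Ro J H or there exists K with H R^1 K and J Ro^1 K. -/

import Mathlib

/-- `NSteps R n x y` : there is a chain `x = f 0, f 1, …, f n = y` with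
`R (f i) (f (i+1))` for each `i < n`, i.e. an `n`-step `R`-reduction sequence. -/
def NSteps {α : Type*} (R : α → α → Prop) (n : ℕ) (x y : α) : Prop :=
  ∃ f : ℕ → α, f 0 = x ∧ f n = y ∧ ∀ i < n, R (f i) (f (i + 1))

/-!
Tile the peak `y ← x → z`, whose sides are `n` steps of `S` and `m` steps of `R`. Each elementary
tile has one of three shapes: its two targets coincide, one `S`-step closes it, or one `R`-step
and one `S`-step close it. In all three, following `S` first is at most as long as following `R`
first, and this inequality is additive under pasting. The tiling terminates because no tile splits
an `S`-step into several: a single `S`-step can be carried along the `R`-side, at each tile either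
surviving as a single step or vanishing.
-/

section NSteps

variable {α : Type*} {R : α → α → Prop} {m n : ℕ} {x y z : α}

theorem nSteps_zero_iff : NSteps R 0 x y ↔ x = y :=
  ⟨fun ⟨_, h₀, h₀', _⟩ => h₀.symm.trans h₀',
    fun h => ⟨fun _ => x, rfl, h, fun _ hi => absurd hi (Nat.not_lt_zero _)⟩⟩

theorem nSteps_succ_iff : NSteps R (n + 1) x z ↔ ∃ y, R x y ∧ NSteps R n y z := by
  constructor
  · rintro ⟨f, rfl, rfl, hf⟩
    exact ⟨f 1, hf 0 n.succ_pos, fun i => f (i + 1), rfl, rfl,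
      fun i hi => hf (i + 1) (Nat.succ_lt_succ hi)⟩
  · rintro ⟨_, hxy, f, rfl, rfl, hf⟩
    refine ⟨fun i => Nat.casesOn i x f, rfl, rfl, fun i hi => ?_⟩
    cases i with
    | zero => exact hxy
    | succ i => exact hf i (Nat.lt_of_succ_lt_succ hi)

theorem nSteps_one_iff : NSteps R 1 x y ↔ R x y := by
  simp only [nSteps_succ_iff, nSteps_zero_iff, exists_eq_right]

theorem NSteps.refl (R : α → α → Prop) (x : α) : NSteps R 0 x x :=
  nSteps_zero_iff.mpr rfl

theorem NSteps.head (hxy : R x y) (hyz : NSteps R n y z) : NSteps R (n + 1) x z :=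
  nSteps_succ_iff.mpr ⟨y, hxy, hyz⟩

theorem NSteps.trans (hxy : NSteps R m x y) (hyz : NSteps R n y z) : NSteps R (m + n) x z := by
  induction m generalizing x with
  | zero =>
    obtain rfl := nSteps_zero_iff.mp hxy
    rwa [Nat.zero_add]
  | succ m ih =>
    obtain ⟨w, hxw, hwy⟩ := nSteps_succ_iff.mp hxy
    rw [Nat.add_right_comm]
    exact (ih hwy).head hxw

end NSteps

section Commutation

variable {α : Type*} {R S : α → α → Prop} {m n : ℕ} {x y z : α}

/-- The outermost local commutation property, closing every one-step peak with distinct targets.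
In the intended reading `S` consists of the outermost steps of the rewrite relation `R`. -/
def OutermostLocalCommutation (R S : α → α → Prop) : Prop :=
  ∀ x y z, S x y → R x z → y ≠ z → S z y ∨ ∃ w, R y w ∧ S z w

/-- The endpoints `y` and `z` of a peak made of `n` steps of `S` to `y` and `m` steps of `R` to `z`
can be joined by `R`-steps from `y` and `S`-steps from `z`, the side through `y` being at most as
long as the side through `z`. The peak enters only through the lengths `n` and `m`. -/
def OrderedJoin (R S : α → α → Prop) (n m : ℕ) (y z : α) : Prop :=
  ∃ (w : α) (k l : ℕ), NSteps R k y w ∧ NSteps S l z w ∧ n + k ≤ m + l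

theorem OutermostLocalCommutation.strip (hcomm : OutermostLocalCommutation R S)
    (hxy : S x y) (hxz : NSteps R m x z) : OrderedJoin R S 1 m y z := by
  induction m generalizing x y with
  | zero =>
    obtain rfl := nSteps_zero_iff.mp hxz
    exact ⟨y, 0, 1, .refl R y, nSteps_one_iff.mpr hxy, by omega⟩
  | succ m ih =>
    obtain ⟨u, hxu, huz⟩ := nSteps_succ_iff.mp hxz
    obtain rfl | hyu := eq_or_ne y u
    · exact ⟨z, m, 0, huz, .refl S z, by omega⟩
    obtain huy | ⟨v, hyv, huv⟩ := hcomm x y u hxy hxu hyu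
    · obtain ⟨w, k, l, hyw, hzw, hle⟩ := ih huy huz
      exact ⟨w, k, l, hyw, hzw, by omega⟩
    · obtain ⟨w, k, l, hvw, hzw, hle⟩ := ih huv huz
      exact ⟨w, k + 1, l, hvw.head hyv, hzw, by omega⟩

theorem orderedJoin_of_strip
    (hstrip : ∀ ⦃m x y z⦄, S x y → NSteps R m x z → OrderedJoin R S 1 m y z)
    (hxy : NSteps S n x y) (hxz : NSteps R m x z) : OrderedJoin R S n m y z := by
  induction n generalizing m x z with
  | zero =>
    obtain rfl := nSteps_zero_iff.mp hxy
    exact ⟨z, m, 0, hxz, .refl S z, by omega⟩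
  | succ n ih =>
    obtain ⟨u, hxu, huy⟩ := nSteps_succ_iff.mp hxy
    obtain ⟨v, p, q, huv, hzv, hpq⟩ := hstrip hxu hxz
    obtain ⟨w, k, l, hyw, hvw, hkl⟩ := ih huy huv
    exact ⟨w, k, q + l, hyw, hzv.trans hvw, by omega⟩

end Commutation

theorem outermost_commutation_quantitative
    {α : Type*} (R Ro : α → α → Prop)
    (hcomm : ∀ G H J, Ro G H → R G J → H ≠ J →
      Ro J H ∨ ∃ K, R H K ∧ Ro J K) :
    (∀ (n m : ℕ) (G H J : α), NSteps Ro n G H → NSteps R m G J →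
      ∃ (K : α) (k l : ℕ), NSteps R k H K ∧ NSteps Ro l J K ∧ n + k ≤ m + l) ∧
    (∀ G H J : α, Ro G H → R G J → H ≠ J →
      Ro J H ∨ ∃ K, NSteps R 1 H K ∧ NSteps Ro 1 J K) := by
  have hlocal : OutermostLocalCommutation R Ro := hcomm
  constructor
  · intro n m G H J hGH hGJ
    exact orderedJoin_of_strip (fun _ _ _ _ => hlocal.strip) hGH hGJ
  · simpa only [nSteps_one_iff] using hcomm
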